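/- Let α>0 and 0≤θ<α. If W_α(x)=∫_0^x y^{α-1}(1−F(y))dy is regularly varying with index θ at infinity, then H_α(x)=∫_{[0,x]} y^α dF(y) is regularly varying with index θ at infinity. In particular (θ=0), if W_α is slowly varying then H_α is slowly varying. -/

import Mathlib

open MeasureTheory Set Filter Topology

/-- The cumulative distribution function of a measure `μ` on `ℝ`. -/
noncomputable def distF (μ : Measure ℝ) (x : ℝ) : ℝ := (μ (Iic x)).toReal

/-- Truncated `α`-th moment `H_α(x) = ∫_{[0,x]} y^α dF(y)`. -/
noncomputable def Htr (μ : Measure ℝ) (α x : ℝ) : ℝ := ∫ y in Iic x, y ^ α ∂μ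

/-- `W_α(x) = ∫_0^x y^(α-1) (1 - F(y)) dy` (Lebesgue integral). -/
noncomputable def Wtr (μ : Measure ℝ) (α x : ℝ) : ℝ :=
  ∫ y in Ioc (0:ℝ) x, y ^ (α - 1) * (1 - distF μ y)

/-- The Williamson transform `G_α(x) = ∫_{[0,x]} (1 - (t/x)^α) dF(t)`. -/
noncomputable def Gw (μ : Measure ℝ) (α x : ℝ) : ℝ := ∫ t in Iic x, (1 - (t / x) ^ α) ∂μ

/-- `g` is regularly varying at infinity with index `ρ`. -/
def RegVary (g : ℝ → ℝ) (ρ : ℝ) : Prop :=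
  ∀ t : ℝ, 0 < t → Tendsto (fun x => g (t * x) / g x) atTop (𝓝 (t ^ ρ))

/-!
Let `Y` have distribution function `F` and write `U = 1 - F`. Computing `E[min(Y, x)^α]` in two
ways gives `H_α(x) = α W_α(x) - x^α U(x)`, so it suffices to know `x^α U(x) / W_α(x) → θ`, which is
Karamata's monotone density theorem. As `U` is nonincreasing,
`W_α(lx) - W_α(x) ≤ x^α U(x) ∫_1^l u^(α-1) du` for every `l > 0`, on either side of `1`. Dividing
by `W_α(x)`, letting `x → ∞` and then `l → 1` from the right and from the left squeezes
`x^α U(x) / W_α(x)` to `θ`, the quotient of the derivatives of `l^θ` and `∫_1^l u^(α-1) du` at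
`l = 1`. Hence `H_α / W_α → α - θ ≠ 0`, and `H_α` inherits the regular variation of `W_α`.
-/

namespace RegVary

variable {f g : ℝ → ℝ} {ρ : ℝ}

lemma eventually_ne_zero (hg : RegVary g ρ) : ∀ᶠ x in atTop, g x ≠ 0 := by
  have h := hg 1 one_pos
  rw [Real.one_rpow] at h
  filter_upwards [h.eventually_ne one_ne_zero] with x hx h0
  exact hx (by rw [h0, div_zero])

lemma eventually_pos (hg : RegVary g ρ) (hg0 : ∀ᶠ x in atTop, 0 ≤ g x) :
    ∀ᶠ x in atTop, 0 < g x := by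
  filter_upwards [hg.eventually_ne_zero, hg0] with x hne h0 using h0.lt_of_ne' hne

theorem of_tendsto_div {c : ℝ} (hg : RegVary g ρ) (hc : c ≠ 0)
    (hfg : Tendsto (fun x => f x / g x) atTop (𝓝 c)) : RegVary f ρ := by
  intro t ht
  have htx : Tendsto (fun x : ℝ => t * x) atTop atTop := tendsto_id.const_mul_atTop ht
  have hlim : Tendsto (fun x => f (t * x) / g (t * x) * (g (t * x) / g x) / (f x / g x)) atTop
      (𝓝 (t ^ ρ)) := by
    have h := ((hfg.comp htx).mul (hg t ht)).div hfg hc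
    rwa [mul_div_cancel_left₀ _ hc] at h
  refine hlim.congr' ?_
  filter_upwards [hg.eventually_ne_zero, htx.eventually hg.eventually_ne_zero] with x hx htx
  rw [div_mul_div_cancel₀ htx, div_div_div_cancel_right₀ hx]

end RegVary

section AntitoneWeight

variable {w f : ℝ → ℝ} {a b : ℝ}

lemma intervalIntegrable_mul_of_antitoneOn (hw : IntervalIntegrable w volume a b)
    (hf : AntitoneOn f (uIcc a b)) :
    IntervalIntegrable (fun y => w y * f y) volume a b := by
  rw [intervalIntegrable_iff] at hw ⊢
  refine hw.mul_bdd (c := max |f a| |f b|) hf.intervalIntegrable.def'.aestronglyMeasurable ?_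
  filter_upwards [ae_restrict_mem measurableSet_uIoc] with y hy
  have hy' : y ∈ uIcc a b := uIoc_subset_uIcc hy
  rcases le_total a b with hab | hba
  · rw [max_comm]
    have hyI := uIcc_of_le hab ▸ hy'
    exact abs_le_max_abs_abs (hf hy' right_mem_uIcc hyI.2) (hf left_mem_uIcc hy' hyI.1)
  · have hyI := uIcc_of_ge hba ▸ hy'
    exact abs_le_max_abs_abs (hf hy' left_mem_uIcc hyI.2) (hf right_mem_uIcc hy' hyI.1)

lemma integral_mul_le_mul_integral_of_antitoneOn (hw : IntervalIntegrable w volume a b)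
    (hw0 : ∀ y ∈ uIcc a b, 0 ≤ w y) (hf : AntitoneOn f (uIcc a b)) :
    ∫ y in a..b, w y * f y ≤ f a * ∫ y in a..b, w y := by
  have hwf := intervalIntegrable_mul_of_antitoneOn hw hf
  rw [mul_comm, ← intervalIntegral.integral_mul_const]
  rcases le_total a b with hab | hba
  · refine intervalIntegral.integral_mono_on hab hwf (hw.mul_const _) fun y hy => ?_
    rw [← uIcc_of_le hab] at hy
    have hfy : f y ≤ f a := hf left_mem_uIcc hy (uIcc_of_le hab ▸ hy).1
    exact mul_le_mul_of_nonneg_left hfy (hw0 y hy)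
  · rw [intervalIntegral.integral_symm b a, intervalIntegral.integral_symm b a, neg_le_neg_iff]
    refine intervalIntegral.integral_mono_on hba (hw.mul_const _).symm hwf.symm fun y hy => ?_
    rw [← uIcc_of_ge hba] at hy
    have hfy : f a ≤ f y := hf hy left_mem_uIcc (uIcc_of_ge hba ▸ hy).2
    exact mul_le_mul_of_nonneg_left hfy (hw0 y hy)

end AntitoneWeight

lemma intervalIntegrable_rpow_of_pos (p : ℝ) {a b : ℝ} (ha : 0 < a) (hb : 0 < b) :
    IntervalIntegrable (fun u : ℝ => u ^ p) volume a b :=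
  intervalIntegral.intervalIntegrable_rpow (Or.inr (notMem_uIcc_of_lt ha hb))

lemma integral_rpow_pos (p : ℝ) {a b : ℝ} (ha : 0 < a) (hab : a < b) :
    0 < ∫ u in a..b, u ^ p :=
  intervalIntegral.intervalIntegral_pos_of_pos_on
    (intervalIntegrable_rpow_of_pos p ha (ha.trans hab))
    (fun _ hu => Real.rpow_pos_of_pos (ha.trans hu.1) p) hab

lemma integral_rpow_eq_rpow_mul_integral (p : ℝ) {x l : ℝ} (hx : 0 < x) (hl : 0 < l) :
    ∫ u in x..x * l, u ^ (p - 1) = x ^ p * ∫ u in (1 : ℝ)..l, u ^ (p - 1) := by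
  have hscale : ∫ u in (1 : ℝ)..l, (x * u) ^ (p - 1) =
      x ^ (p - 1) * ∫ u in (1 : ℝ)..l, u ^ (p - 1) := by
    rw [← intervalIntegral.integral_const_mul]
    refine intervalIntegral.integral_congr fun u hu => ?_
    exact Real.mul_rpow hx.le (le_of_lt (ordConnected_Ioi.uIcc_subset one_pos hl hu))
  calc ∫ u in x..x * l, u ^ (p - 1)
    _ = x * ∫ u in (1 : ℝ)..l, (x * u) ^ (p - 1) := by
      rw [intervalIntegral.mul_integral_comp_mul_left (f := fun u : ℝ => u ^ (p - 1)), mul_one]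
    _ = x ^ p * ∫ u in (1 : ℝ)..l, u ^ (p - 1) := by
      rw [hscale, ← mul_assoc, mul_comm x, ← Real.rpow_add_one hx.ne', sub_add_cancel]

lemma tendsto_rpow_sub_one_div_integral_rpow (ρ p : ℝ) :
    Tendsto (fun l : ℝ => (l ^ ρ - 1) / ∫ u in (1 : ℝ)..l, u ^ p) (𝓝[≠] 1) (𝓝 ρ) := by
  have hnum : HasDerivAt (fun l : ℝ => l ^ ρ) ρ 1 := by
    simpa using Real.hasDerivAt_rpow_const (x := 1) (p := ρ) (Or.inl one_ne_zero)
  have hden : HasDerivAt (fun l : ℝ => ∫ u in (1 : ℝ)..l, u ^ p) 1 1 := by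
    have hmeas : Measurable fun u : ℝ => u ^ p := by fun_prop
    simpa only [Real.one_rpow] using intervalIntegral.integral_hasDerivAt_right
      (intervalIntegrable_rpow_of_pos p one_pos one_pos)
      hmeas.stronglyMeasurable.stronglyMeasurableAtFilter
      (Real.continuousAt_rpow_const 1 p (Or.inl one_ne_zero))
  have hquot := hnum.tendsto_slope.div hden.tendsto_slope one_ne_zero
  rw [div_one] at hquot
  refine hquot.congr' ?_
  filter_upwards [self_mem_nhdsWithin] with l hl
  simp only [Pi.div_apply, slope_def_field, Real.one_rpow, intervalIntegral.integral_same, sub_zero]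
  exact div_div_div_cancel_right₀ (sub_ne_zero.2 hl) _ _

lemma sub_le_rpow_mul_mul_integral_of_antitoneOn {V f : ℝ → ℝ} {α x l : ℝ}
    (hf : AntitoneOn f (Ioi 0))
    (hVf : ∀ a b, 0 < a → 0 < b → V b - V a = ∫ y in a..b, y ^ (α - 1) * f y)
    (hx : 0 < x) (hl : 0 < l) :
    V (l * x) - V x ≤ x ^ α * f x * ∫ u in (1 : ℝ)..l, u ^ (α - 1) := by
  have hxl : 0 < x * l := mul_pos hx hl
  have hsub : uIcc x (x * l) ⊆ Ioi 0 := ordConnected_Ioi.uIcc_subset hx hxl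
  calc V (l * x) - V x
    _ = ∫ y in x..x * l, y ^ (α - 1) * f y := by rw [mul_comm l, hVf x (x * l) hx hxl]
    _ ≤ f x * ∫ y in x..x * l, y ^ (α - 1) :=
      integral_mul_le_mul_integral_of_antitoneOn (intervalIntegrable_rpow_of_pos _ hx hxl)
        (fun y hy => Real.rpow_nonneg (le_of_lt (hsub hy)) _) (hf.mono hsub)
    _ = x ^ α * f x * ∫ u in (1 : ℝ)..l, u ^ (α - 1) := by
      rw [integral_rpow_eq_rpow_mul_integral α hx hl]; ring

theorem RegVary.tendsto_rpow_mul_div {V f : ℝ → ℝ} {ρ α : ℝ} (hV : RegVary V ρ)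
    (hV0 : ∀ᶠ x in atTop, 0 ≤ V x) (hf : AntitoneOn f (Ioi 0))
    (hVf : ∀ a b, 0 < a → 0 < b → V b - V a = ∫ y in a..b, y ^ (α - 1) * f y) :
    Tendsto (fun x => x ^ α * f x / V x) atTop (𝓝 ρ) := by
  set c : ℝ → ℝ := fun l => ∫ u in (1 : ℝ)..l, u ^ (α - 1)
  have hincr (l : ℝ) (hl : 0 < l) :
      ∀ᶠ x in atTop, V (l * x) / V x - 1 ≤ x ^ α * f x / V x * c l := by
    filter_upwards [hV.eventually_pos hV0, eventually_gt_atTop 0] with x hVx hx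
    rw [div_sub_one hVx.ne', div_mul_eq_mul_div]
    gcongr
    exact sub_le_rpow_mul_mul_integral_of_antitoneOn hf hVf hx hl
  have hlim (l : ℝ) (hl : 0 < l) : Tendsto (fun x => (V (l * x) / V x - 1) / c l) atTop
      (𝓝 ((l ^ ρ - 1) / c l)) := ((hV l hl).sub_const 1).div_const _
  have hquot := tendsto_rpow_sub_one_div_integral_rpow ρ (α - 1)
  refine tendsto_order.2 ⟨fun a ha => ?_, fun a ha => ?_⟩
  · obtain ⟨l, hal, hl1⟩ := (((hquot.mono_left (nhdsGT_le_nhdsNE 1)).eventually_const_lt ha).and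
      self_mem_nhdsWithin).exists
    have hl : 0 < l := one_pos.trans hl1
    have hc : 0 < c l := integral_rpow_pos _ one_pos hl1
    filter_upwards [hincr l hl, (hlim l hl).eventually_const_lt hal] with x hx hax
    exact hax.trans_le ((div_le_iff₀ hc).2 hx)
  · obtain ⟨l, hla, hl⟩ := (((hquot.mono_left (nhdsLT_le_nhdsNE 1)).eventually_lt_const ha).and
      (Ioo_mem_nhdsLT one_pos)).exists
    have hc : c l < 0 := by
      simpa only [c, intervalIntegral.integral_symm l 1, neg_lt_zero] using
        integral_rpow_pos _ hl.1 hl.2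
    filter_upwards [hincr l hl.1, (hlim l hl.1).eventually_lt_const hla] with x hx hax
    exact ((le_div_iff_of_neg hc).2 hx).trans_lt hax

theorem integral_rpow_eq_mul_integral_rpow_mul_meas_lt {Ω : Type*} [MeasurableSpace Ω]
    {μ : Measure Ω} {f : Ω → ℝ} {p : ℝ} (hp : 0 < p) (hf : 0 ≤ᵐ[μ] f)
    (hfp : Integrable (fun ω => f ω ^ p) μ) :
    ∫ ω, f ω ^ p ∂μ = p * ∫ t in Ioi 0, t ^ (p - 1) * μ.real {ω | t < f ω} := by
  have hfp0 : 0 ≤ᵐ[μ] fun ω => f ω ^ p := hf.mono fun ω hω => Real.rpow_nonneg hω p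
  rw [hfp.integral_eq_integral_meas_lt hfp0, ← integral_comp_rpow_Ioi_of_pos hp,
    ← integral_const_mul]
  refine setIntegral_congr_fun measurableSet_Ioi fun t (ht : 0 < t) => ?_
  have hlevel : μ.real {ω | t ^ p < f ω ^ p} = μ.real {ω | t < f ω} := by
    refine measureReal_congr (hf.mono fun ω hω => propext ?_)
    exact Real.rpow_lt_rpow_iff ht.le hω hp
  simp only [smul_eq_mul, hlevel, mul_assoc]

section DistributionFunction

variable (μ : Measure ℝ) [IsProbabilityMeasure μ] {α : ℝ}

lemma monotone_distF : Monotone (distF μ) := fun _ _ h => measureReal_mono (Iic_subset_Iic.2 h)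

lemma distF_le_one (x : ℝ) : distF μ x ≤ 1 := measureReal_le_one

lemma measureReal_Ioi_eq_one_sub_distF (x : ℝ) : μ.real (Ioi x) = 1 - distF μ x := by
  rw [← compl_Iic, probReal_compl_eq_one_sub measurableSet_Iic]
  rfl

lemma antitone_one_sub_distF : Antitone fun x => 1 - distF μ x :=
  fun _ _ h => sub_le_sub_left (monotone_distF μ h) 1

lemma Wtr_nonneg (α x : ℝ) : 0 ≤ Wtr μ α x :=
  setIntegral_nonneg measurableSet_Ioc fun y hy =>
    mul_nonneg (Real.rpow_nonneg hy.1.le _) (sub_nonneg.2 (distF_le_one μ y))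

lemma Wtr_sub_Wtr (hα : 0 < α) {a b : ℝ} (ha : 0 ≤ a) (hb : 0 ≤ b) :
    Wtr μ α b - Wtr μ α a = ∫ y in a..b, y ^ (α - 1) * (1 - distF μ y) := by
  have hint (x : ℝ) :
      IntervalIntegrable (fun y => y ^ (α - 1) * (1 - distF μ y)) volume 0 x :=
    intervalIntegrable_mul_of_antitoneOn
      (intervalIntegral.intervalIntegrable_rpow' (by linarith))
      ((antitone_one_sub_distF μ).antitoneOn _)
  rw [Wtr, Wtr, ← intervalIntegral.integral_of_le ha, ← intervalIntegral.integral_of_le hb,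
    intervalIntegral.integral_interval_sub_left (hint b) (hint a)]

variable {μ} {x : ℝ}

lemma integrable_min_rpow (hμ : ∀ᵐ y ∂μ, 0 ≤ y) (hα : 0 ≤ α) (hx : 0 ≤ x) :
    Integrable (fun y => min y x ^ α) μ := by
  refine Integrable.of_bound (by fun_prop (disch := exact hα)) (x ^ α) ?_
  filter_upwards [hμ] with y hy
  have hmin : 0 ≤ min y x := le_min hy hx
  rw [Real.norm_of_nonneg (Real.rpow_nonneg hmin _)]
  exact Real.rpow_le_rpow hmin (min_le_right _ _) hα

lemma integral_min_rpow_eq_mul_Wtr (hμ : ∀ᵐ y ∂μ, 0 ≤ y) (hα : 0 < α) (hx : 0 ≤ x) :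
    ∫ y, min y x ^ α ∂μ = α * Wtr μ α x := by
  rw [integral_rpow_eq_mul_integral_rpow_mul_meas_lt hα (hμ.mono fun y hy => le_min hy hx)
    (integrable_min_rpow hμ hα.le hx), Wtr, integral_Ioc_eq_integral_Ioo]
  congr 1
  have hlevel (t : ℝ) : t ^ (α - 1) * μ.real {y | t < min y x} =
      (Iio x).indicator (fun t => t ^ (α - 1) * (1 - distF μ t)) t := by
    by_cases htx : t < x
    · have hset : {y | t < min y x} = Ioi t := by ext y; simp [htx]
      rw [hset, measureReal_Ioi_eq_one_sub_distF, indicator_of_mem (mem_Iio.2 htx)]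
    · simp [htx]
  simp only [hlevel, setIntegral_indicator measurableSet_Iio, Ioi_inter_Iio]

lemma integral_min_rpow_eq_Htr_add (hμ : ∀ᵐ y ∂μ, 0 ≤ y) (hα : 0 ≤ α) (hx : 0 ≤ x) :
    ∫ y, min y x ^ α ∂μ = Htr μ α x + x ^ α * (1 - distF μ x) := by
  have hbelow : ∫ y in Iic x, min y x ^ α ∂μ = Htr μ α x :=
    setIntegral_congr_fun measurableSet_Iic fun y (hy : y ≤ x) => by
      simp only [min_eq_left hy]
  have habove : ∫ y in Ioi x, min y x ^ α ∂μ = x ^ α * (1 - distF μ x) := by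
    rw [setIntegral_congr_fun (g := fun _ => x ^ α) measurableSet_Ioi
      fun y (hy : x < y) => by simp only [min_eq_right hy.le], setIntegral_const,
      measureReal_Ioi_eq_one_sub_distF, smul_eq_mul, mul_comm]
  rw [← integral_add_compl measurableSet_Iic (integrable_min_rpow hμ hα hx), compl_Iic, hbelow,
    habove]

theorem Htr_eq_mul_Wtr_sub (hμ : ∀ᵐ y ∂μ, 0 ≤ y) (hα : 0 < α) (hx : 0 ≤ x) :
    Htr μ α x = α * Wtr μ α x - x ^ α * (1 - distF μ x) :=
  eq_sub_of_add_eq <| (integral_min_rpow_eq_Htr_add hμ hα.le hx).symm.trans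
    (integral_min_rpow_eq_mul_Wtr hμ hα hx)

theorem tendsto_Htr_div_Wtr {θ : ℝ} (hμ : ∀ᵐ y ∂μ, 0 ≤ y) (hα : 0 < α)
    (hW : RegVary (Wtr μ α) θ) :
    Tendsto (fun x => Htr μ α x / Wtr μ α x) atTop (𝓝 (α - θ)) := by
  have htail : Tendsto (fun x => x ^ α * (1 - distF μ x) / Wtr μ α x) atTop (𝓝 θ) :=
    hW.tendsto_rpow_mul_div (Eventually.of_forall (Wtr_nonneg μ α))
      ((antitone_one_sub_distF μ).antitoneOn _)
      fun a b ha hb => Wtr_sub_Wtr μ hα ha.le hb.le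
  refine (htail.const_sub α).congr' ?_
  filter_upwards [hW.eventually_ne_zero, eventually_ge_atTop 0] with x hWx hx
  rw [Htr_eq_mul_Wtr_sub hμ hα hx, sub_div, mul_div_cancel_right₀ _ hWx]

end DistributionFunction

theorem stmt8 (μ : Measure ℝ) [IsProbabilityMeasure μ] (hsupp : μ (Iic 0) = 0)
    (α θ : ℝ) (hα : 0 < α) (hθ : 0 ≤ θ) (hθα : θ < α)
    (hW : RegVary (Wtr μ α) θ) :
    RegVary (Htr μ α) θ := by
  have hμ : ∀ᵐ y ∂μ, 0 ≤ y :=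
    (measure_eq_zero_iff_ae_notMem.1 hsupp).mono fun y hy => (not_le.1 hy).le
  exact hW.of_tendsto_div (sub_ne_zero.2 hθα.ne') (tendsto_Htr_div_Wtr hμ hα hW)
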